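/- arXiv:2402.14746 — 2 statements merged into one kernel-verified Lean document; each statement's English description precedes it below -/
import Mathlib

section
/- For every δ ∈ (0,1), with probability at least 1 − δ, simultaneously for all functions f : S → Y, |Ĉ(f) − C(f)| ≤ λ·√((|S|·log|Y| + log(2/δ)) / (2·n)). -/
open MeasureTheory Finset

/-!
Hoeffding's inequality bounds the deviation of the empirical mean of `log ∘ f` for one model `f`,
since the values of `log ∘ f` lie in an interval of length `lam`. There are `|Y| ^ |S|` models, so a
union bound costs the summand `|S| log |Y|` under the square root.

No measurability of the models or of the deviation event is available, because the `σ`-algebra on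
`S` is arbitrary. The samples are therefore drawn from the discrete space `Fin |S|` and pushed
forward along an enumeration of `S`; the image measure of an arbitrary set is at least the measure
of its preimage.
-/

section Concentration

open ProbabilityTheory

variable {Ω : Type*} [MeasurableSpace Ω] {μ : Measure Ω}

lemma measureReal_le_abs_le_of_hasSubgaussianMGF {X : Ω → ℝ} {c : NNReal}
    (hX : HasSubgaussianMGF X c μ) {ε : ℝ} (hε : 0 ≤ ε) :
    μ.real {ω | ε ≤ |X ω|} ≤ 2 * Real.exp (-ε ^ 2 / (2 * c)) := by
  calc μ.real {ω | ε ≤ |X ω|}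
      = μ.real ({ω | ε ≤ X ω} ∪ {ω | ε ≤ (-X) ω}) := by
        simp only [le_abs, Set.ofPred_or, Pi.neg_apply]
    _ ≤ μ.real {ω | ε ≤ X ω} + μ.real {ω | ε ≤ (-X) ω} := measureReal_union_le _ _
    _ ≤ 2 * Real.exp (-ε ^ 2 / (2 * c)) := by
        linarith [hX.measure_ge_le hε, hX.neg.measure_ge_le hε]

lemma measureReal_le_abs_sum_sub_integral_le {ι : Type*} {X : ι → Ω → ℝ}
    (hX : iIndepFun X μ) {s : Finset ι} (hXm : ∀ i ∈ s, AEMeasurable (X i) μ) {a b : ι → ℝ}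
    (hXab : ∀ i ∈ s, ∀ᵐ ω ∂μ, X i ω ∈ Set.Icc (a i) (b i)) {ε : ℝ} (hε : 0 ≤ ε) :
    μ.real {ω | ε ≤ |∑ i ∈ s, (X i ω - ∫ ω', X i ω' ∂μ)|} ≤
      2 * Real.exp (-2 * ε ^ 2 / ∑ i ∈ s, (b i - a i) ^ 2) := by
  have : IsProbabilityMeasure μ := hX.isProbabilityMeasure
  have hindep : iIndepFun (fun i ω ↦ X i ω - ∫ ω', X i ω' ∂μ) μ :=
    hX.comp (fun i x ↦ x - ∫ ω', X i ω' ∂μ) fun i ↦ measurable_id.sub_const _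
  have hsum := HasSubgaussianMGF.sum_of_iIndepFun hindep
    fun i hi ↦ hasSubgaussianMGF_of_mem_Icc (hXm i hi) (hXab i hi)
  refine (measureReal_le_abs_le_of_hasSubgaussianMGF hsum hε).trans_eq ?_
  have hproxy : ((∑ i ∈ s, (‖b i - a i‖₊ / 2) ^ 2 : NNReal) : ℝ) =
      (∑ i ∈ s, (b i - a i) ^ 2) / 4 := by
    push_cast
    rw [sum_div]
    refine sum_congr rfl fun i _ ↦ ?_
    rw [div_pow, Real.norm_eq_abs, sq_abs]
    norm_num
  rw [hproxy, ← mul_div_mul_left _ (2 * _) two_ne_zero]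
  congr 3 <;> ring

lemma measureReal_pi_le_abs_mean_sub_integral_le [IsProbabilityMeasure μ] {f : Ω → ℝ}
    (hf : AEMeasurable f μ) {a b : ℝ} (hfab : ∀ᵐ x ∂μ, f x ∈ Set.Icc a b) {n : ℕ} (hn : 0 < n)
    {t : ℝ} (ht : 0 ≤ t) :
    (Measure.pi fun _ : Fin n ↦ μ).real {ω | t ≤ |(∑ i, f (ω i)) / n - ∫ x, f x ∂μ|} ≤
      2 * Real.exp (-2 * n * t ^ 2 / (b - a) ^ 2) := by
  have hn' : (0 : ℝ) < n := Nat.cast_pos.2 hn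
  have heval (i : Fin n) := measurePreserving_eval (fun _ : Fin n ↦ μ) i
  have hmean (i : Fin n) : ∫ ω, f (ω i) ∂(Measure.pi fun _ : Fin n ↦ μ) = ∫ x, f x ∂μ :=
    integral_comp_eval (i := i) hf.aestronglyMeasurable
  have hevent : {ω : Fin n → Ω | t ≤ |(∑ i, f (ω i)) / n - ∫ x, f x ∂μ|} =
      {ω | n * t ≤ |∑ i, (f (ω i) - ∫ ω', f (ω' i) ∂(Measure.pi fun _ : Fin n ↦ μ))|} := by
    ext ω
    have hsum : ∑ i, (f (ω i) - ∫ x, f x ∂μ) = n * ((∑ i, f (ω i)) / n - ∫ x, f x ∂μ) := by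
      rw [sum_sub_distrib, sum_const, card_univ, Fintype.card_fin, nsmul_eq_mul]
      field_simp
    simp only [Set.mem_ofPred_eq, hmean, hsum, abs_mul, Nat.abs_cast, mul_le_mul_iff_right₀ hn']
  rw [hevent]
  refine (measureReal_le_abs_sum_sub_integral_le (a := fun _ ↦ a) (b := fun _ ↦ b)
    (iIndepFun_pi fun _ ↦ hf)
    (fun i _ ↦ hf.comp_quasiMeasurePreserving (heval i).quasiMeasurePreserving)
    (fun i _ ↦ (heval i).quasiMeasurePreserving.ae hfab) (by positivity)).trans_eq ?_
  rw [sum_const, card_univ, Fintype.card_fin, nsmul_eq_mul,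
    ← mul_div_mul_left _ ((b - a) ^ 2) hn'.ne']
  congr 3
  ring

lemma one_sub_sum_measureReal_le_measureReal_forall_notMem [IsProbabilityMeasure μ] {κ : Type*}
    (F : Finset κ) (A : κ → Set Ω) :
    1 - ∑ k ∈ F, μ.real (A k) ≤ μ.real {ω | ∀ k ∈ F, ω ∉ A k} := by
  have hcover : {ω | ∀ k ∈ F, ω ∉ A k} ∪ ⋃ k ∈ F, A k = Set.univ := by
    ext ω
    simp only [Set.mem_union, Set.mem_ofPred_eq, Set.mem_iUnion, Set.mem_univ, iff_true,
      exists_prop]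
    by_contra! h
    exact h.1.elim fun k hk ↦ h.2 k hk.1 hk.2
  rw [sub_le_iff_le_add]
  calc 1 = μ.real ({ω | ∀ k ∈ F, ω ∉ A k} ∪ ⋃ k ∈ F, A k) := by rw [hcover, probReal_univ]
    _ ≤ μ.real {ω | ∀ k ∈ F, ω ∉ A k} + μ.real (⋃ k ∈ F, A k) := measureReal_union_le _ _
    _ ≤ μ.real {ω | ∀ k ∈ F, ω ∉ A k} + ∑ k ∈ F, μ.real (A k) := by
        gcongr
        exact measureReal_biUnion_finset_le _ _

lemma exists_forall_mem_Icc_of_forall_abs_sub_le {α : Type*} {f : α → ℝ} {d : ℝ}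
    (hf : ∀ x y, |f x - f y| ≤ d) : ∃ a, ∀ x, f x ∈ Set.Icc a (a + d) := by
  have hlower (y : α) : f y - d ∈ lowerBounds (Set.range f) :=
    Set.forall_mem_range.2 fun x ↦ by linarith [(abs_le.1 (hf x y)).1]
  refine ⟨⨅ x, f x, fun x ↦ ⟨ciInf_le ⟨_, hlower x⟩ x, ?_⟩⟩
  have : Nonempty α := ⟨x⟩
  linarith [le_ciInf (Set.forall_mem_range.1 (hlower x))]

lemma one_sub_le_measureReal_pi_forall_abs_mean_sub_integral_le [IsProbabilityMeasure μ]
    {κ : Type*} (F : Finset κ) {f : κ → Ω → ℝ} (hfm : ∀ k ∈ F, AEMeasurable (f k) μ)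
    {d : ℝ} (hd : 0 < d) (hfd : ∀ k ∈ F, ∀ x y, |f k x - f k y| ≤ d)
    {n : ℕ} (hn : 0 < n) {δ : ℝ} (hδ0 : 0 < δ) (hδ1 : δ < 1) :
    1 - δ ≤ (Measure.pi fun _ : Fin n ↦ μ).real
      {ω | ∀ k ∈ F, |(∑ i, f k (ω i)) / n - ∫ x, f k x ∂μ| ≤
        d * Real.sqrt ((Real.log #F + Real.log (2 / δ)) / (2 * n))} := by
  set L := Real.log #F + Real.log (2 / δ) with hL
  set r := d * Real.sqrt (L / (2 * n)) with hr
  have hn' : (0 : ℝ) < n := Nat.cast_pos.2 hn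
  have hL0 : 0 ≤ L :=
    add_nonneg (Real.log_natCast_nonneg _) (Real.log_nonneg (by rw [le_div_iff₀ hδ0]; linarith))
  have hexponent : -2 * n * r ^ 2 / d ^ 2 = -L := by
    rw [hr, mul_pow, Real.sq_sqrt (by positivity)]
    field_simp
  have hdev (k : κ) (hk : k ∈ F) :
      (Measure.pi fun _ : Fin n ↦ μ).real {ω | r ≤ |(∑ i, f k (ω i)) / n - ∫ x, f k x ∂μ|} ≤
        δ / #F := by
    have hF : (0 : ℝ) < #F := Nat.cast_pos.2 (card_pos.2 ⟨k, hk⟩)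
    obtain ⟨a, ha⟩ := exists_forall_mem_Icc_of_forall_abs_sub_le (hfd k hk)
    refine (measureReal_pi_le_abs_mean_sub_integral_le (hfm k hk) (.of_forall ha) hn
      (by positivity)).trans_eq ?_
    rw [add_sub_cancel_left, hexponent, hL, Real.exp_neg, Real.exp_add, Real.exp_log hF,
      Real.exp_log (by positivity)]
    field_simp
  have hunion : ∑ k ∈ F, (Measure.pi fun _ : Fin n ↦ μ).real
      {ω | r ≤ |(∑ i, f k (ω i)) / n - ∫ x, f k x ∂μ|} ≤ δ := by
    refine (sum_le_card_nsmul F _ _ hdev).trans ?_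
    rw [nsmul_eq_mul]
    rcases eq_or_ne (#F : ℝ) 0 with hF | hF
    · simpa only [hF, zero_mul] using hδ0.le
    · exact (mul_div_cancel₀ δ hF).le
  calc 1 - δ
      ≤ (Measure.pi fun _ : Fin n ↦ μ).real
          {ω | ∀ k ∈ F, ω ∉ {ω | r ≤ |(∑ i, f k (ω i)) / n - ∫ x, f k x ∂μ|}} :=
        (sub_le_sub_left hunion 1).trans
          (one_sub_sum_measureReal_le_measureReal_forall_notMem F _)
    _ ≤ (Measure.pi fun _ : Fin n ↦ μ).real
          {ω | ∀ k ∈ F, |(∑ i, f k (ω i)) / n - ∫ x, f k x ∂μ| ≤ r} :=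
        measureReal_mono fun ω hω k hk ↦ (not_le.1 (hω k hk)).le

end Concentration

lemma measure_pi_preimage_le_measure_pi_map {ι : Type*} [Fintype ι] {α β : ι → Type*}
    [∀ i, MeasurableSpace (α i)] [∀ i, MeasurableSpace (β i)] (μ : ∀ i, Measure (α i))
    {g : ∀ i, α i → β i} [∀ i, SigmaFinite ((μ i).map (g i))] (hg : ∀ i, Measurable (g i))
    (A : Set (∀ i, β i)) :
    Measure.pi μ ((fun ω i ↦ g i (ω i)) ⁻¹' A) ≤ Measure.pi (fun i ↦ (μ i).map (g i)) A := by
  rw [← Measure.pi_map_pi fun i ↦ (hg i).aemeasurable]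
  exact Measure.le_map_apply
    (measurable_pi_lambda _ fun i ↦ (hg i).comp (measurable_pi_apply i)).aemeasurable A

section FiniteLaw

variable {S : Type*} [Fintype S] [MeasurableSpace S]

/-- The law on a finite space with mass function `p`, as a mixture of Dirac masses. Since `p` is
real-valued, its negative values are truncated to `0`. -/
noncomputable def finiteLaw (p : S → ℝ) : Measure S :=
  ∑ s, ENNReal.ofReal (p s) • Measure.dirac s

lemma isProbabilityMeasure_finiteLaw {p : S → ℝ} (hp : ∀ s, 0 ≤ p s) (hpsum : ∑ s, p s = 1) :
    IsProbabilityMeasure (finiteLaw p) := by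
  constructor
  simp only [finiteLaw, Measure.coe_finsetSum, Finset.sum_apply, Measure.smul_apply,
    measure_univ, smul_eq_mul, mul_one]
  rw [← ENNReal.ofReal_sum_of_nonneg fun s _ ↦ hp s, hpsum, ENNReal.ofReal_one]

lemma integral_finiteLaw [MeasurableSingletonClass S] {p : S → ℝ} (hp : ∀ s, 0 ≤ p s)
    (g : S → ℝ) : ∫ s, g s ∂finiteLaw p = ∑ s, p s * g s := by
  rw [finiteLaw, integral_finsetSum_measure fun s _ ↦
    (integrable_dirac enorm_lt_top).smul_measure ENNReal.ofReal_ne_top]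
  refine sum_congr rfl fun s _ ↦ ?_
  rw [integral_smul_measure, integral_dirac, ENNReal.toReal_ofReal (hp s), smul_eq_mul]

lemma map_finiteLaw_comp_equiv {T : Type*} [Fintype T] [MeasurableSpace T] {e : T ≃ S}
    (he : Measurable e) (p : S → ℝ) :
    (finiteLaw (p ∘ e)).map e = finiteLaw p := by
  rw [finiteLaw, finiteLaw, ← Measure.mapₗ_apply_of_measurable he, map_sum, ← Equiv.sum_comp e]
  simp only [Measure.mapₗ_apply_of_measurable he, Measure.map_smul, Measure.map_dirac' he,
    Function.comp_apply]

lemma ofReal_one_sub_le_measure_pi_finiteLaw {p : S → ℝ} (hp : ∀ s, 0 ≤ p s)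
    (hpsum : ∑ s, p s = 1) {κ : Type*} (F : Finset κ) {f : κ → S → ℝ} {d : ℝ} (hd : 0 < d)
    (hfd : ∀ k ∈ F, ∀ s t, |f k s - f k t| ≤ d) {n : ℕ} (hn : 0 < n) {δ : ℝ} (hδ0 : 0 < δ)
    (hδ1 : δ < 1) :
    ENNReal.ofReal (1 - δ) ≤ Measure.pi (fun _ : Fin n ↦ finiteLaw p)
      {ω | ∀ k ∈ F, |(∑ i, f k (ω i)) / n - ∑ s, p s * f k s| ≤
        d * Real.sqrt ((Real.log #F + Real.log (2 / δ)) / (2 * n))} := by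
  let e : Fin (Fintype.card S) ≃ S := (Fintype.equivFin S).symm
  have he : Measurable e := .of_discrete
  have : IsProbabilityMeasure (finiteLaw (p ∘ e)) :=
    isProbabilityMeasure_finiteLaw (fun _ ↦ hp _) ((Equiv.sum_comp e p).trans hpsum)
  have hmean (k : κ) : ∫ t, f k (e t) ∂finiteLaw (p ∘ e) = ∑ s, p s * f k s :=
    (integral_finiteLaw (fun _ ↦ hp _) _).trans (Equiv.sum_comp e fun s ↦ p s * f k s)
  have henum := one_sub_le_measureReal_pi_forall_abs_mean_sub_integral_le
    (μ := finiteLaw (p ∘ e)) F (f := fun k ↦ f k ∘ e) (fun _ _ ↦ .of_discrete) hd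
    (fun k hk _ _ ↦ hfd k hk _ _) hn hδ0 hδ1
  simp only [Function.comp_apply, hmean] at henum
  rw [← map_finiteLaw_comp_equiv he p]
  exact (ENNReal.ofReal_le_of_le_toReal henum).trans
    (measure_pi_preimage_le_measure_pi_map _ (fun _ ↦ he) _)

end FiniteLaw

section CrossEntropy

variable {S : Type*}

/-- The true cross-entropy `C(f)` of a model `f` under the mass function `p`. -/
noncomputable def crossEntropy [Fintype S] (p f : S → ℝ) : ℝ :=
  -∑ s, p s * Real.log (f s)

/-- The empirical cross-entropy `Ĉ(f)` of a model `f` on the samples `ω`. -/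
noncomputable def empiricalCrossEntropy {n : ℕ} (ω : Fin n → S) (f : S → ℝ) : ℝ :=
  -((1 : ℝ) / n) * ∑ i, Real.log (f (ω i))

variable [Fintype S]

lemma abs_empiricalCrossEntropy_sub_crossEntropy {n : ℕ} (ω : Fin n → S) (p f : S → ℝ) :
    |empiricalCrossEntropy ω f - crossEntropy p f| =
      |(∑ i, Real.log (f (ω i))) / n - ∑ s, p s * Real.log (f s)| := by
  rw [empiricalCrossEntropy, crossEntropy, abs_sub_comm]
  congr 1
  ring

variable [MeasurableSpace S]

theorem uniform_cross_entropy_deviation_general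
    (Y : Finset ℝ) (hY : ∀ y ∈ Y, 0 < y) (lam : ℝ) (hlam : 0 < lam)
    (hratio : ∀ a ∈ Y, ∀ b ∈ Y, |Real.log (a / b)| ≤ lam)
    (p : S → ℝ) (hp : ∀ s, 0 ≤ p s) (hpsum : ∑ s, p s = 1)
    (n : ℕ) (hn : 0 < n) (δ : ℝ) (hδ0 : 0 < δ) (hδ1 : δ < 1) :
    ENNReal.ofReal (1 - δ) ≤
      (Measure.pi fun _ : Fin n ↦ finiteLaw p)
        {ω | ∀ f : S → ℝ, (∀ s, f s ∈ Y) →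
          |empiricalCrossEntropy ω f - crossEntropy p f| ≤
          lam * Real.sqrt
            (((Fintype.card S : ℝ) * Real.log #Y + Real.log (2 / δ)) / (2 * n))} := by
  classical
  have hosc (f : S → ℝ) (hf : f ∈ Fintype.piFinset fun _ ↦ Y) (s t : S) :
      |Real.log (f s) - Real.log (f t)| ≤ lam := by
    have hfY := Fintype.mem_piFinset.1 hf
    rw [← Real.log_div (hY _ (hfY s)).ne' (hY _ (hfY t)).ne']
    exact hratio _ (hfY s) _ (hfY t)
  have hcard : Real.log #(Fintype.piFinset fun _ : S ↦ Y) = Fintype.card S * Real.log #Y := by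
    rw [Fintype.card_piFinset, prod_const, card_univ, Nat.cast_pow, Real.log_pow]
  simpa only [hcard, Fintype.mem_piFinset, ← abs_empiricalCrossEntropy_sub_crossEntropy] using
    ofReal_one_sub_le_measure_pi_finiteLaw hp hpsum _ hlam hosc hn hδ0 hδ1

end CrossEntropy

/-- uniform deviation bound, key step of Theorem 1(a).
With the setup of Statements 0–1 and `|Y| ≥ 2`, for every `δ ∈ (0,1)`, with probability
at least `1 - δ` over the `n` i.i.d. training draws, simultaneously for all LLMs
`f : S → Y`,
`|Ĉ(f) - C(f)| ≤ lam * √((|S| log |Y| + log (2/δ)) / (2 n))`. -/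
theorem uniform_cross_entropy_deviation
    {S : Type*} [Fintype S] [Nonempty S] [MeasurableSpace S]
    (Y : Finset ℝ) (hY : ∀ y ∈ Y, 0 < y ∧ y ≤ 1) (hYcard : 2 ≤ Y.card)
    (lam : ℝ) (hlam : 0 < lam)
    (hlog : ∀ y ∈ Y, |Real.log y| ≤ lam)
    (hratio : ∀ a ∈ Y, ∀ b ∈ Y, |Real.log (a / b)| ≤ lam)
    (p : S → ℝ) (hpY : ∀ s, p s ∈ Y) (hpsum : ∑ s, p s = 1)
    (n : ℕ) (hn : 0 < n) (δ : ℝ) (hδ0 : 0 < δ) (hδ1 : δ < 1) :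
    ENNReal.ofReal (1 - δ) ≤
      (Measure.pi (fun _ : Fin n => ∑ s, ENNReal.ofReal (p s) • Measure.dirac s))
        {ω : Fin n → S | ∀ f : S → ℝ, (∀ s, f s ∈ Y) →
          |(-((1 : ℝ) / n) * ∑ i, Real.log (f (ω i))) -
            (-(∑ s, p s * Real.log (f s)))| ≤
          lam * Real.sqrt
            (((Fintype.card S : ℝ) * Real.log (Y.card) + Real.log (2 / δ)) / (2 * n))} :=
  uniform_cross_entropy_deviation_general Y (fun y hy ↦ (hY y hy).1) lam hlam hratio p
    (fun s ↦ (hY _ (hpY s)).1.le) hpsum n hn δ hδ0 hδ1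
end

section
/- Let ĝ : S → Y be any minimizer over the class F of all functions S → Y of the empirical cross-entropy Ĉ (empirical risk minimization). Then for every δ ∈ (0,1), with probability at least 1 − δ, L(ĝ) ≤ min_{h : S → Y} L(h) + 2·λ·√((|S|·log|Y| + log(2/δ)) / (2·n)); in particular, the excess risk of empirical risk minimization is O(√(|S|/n)). -/
open MeasureTheory Finset

/-!
Since `log (p / h) = log p - log h`, the Kullback–Leibler loss differs from the expectation of the
loss `-log h` by a constant, so only cross-entropies have to be compared. The loss takes values in
an interval of length `lam`; Hoeffding's inequality and a union bound over the finite class show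
that, outside an event of probability `δ`, every empirical cross-entropy is within `ε` of its
expectation. Passing from `g ω` to a competitor `h` through the empirical values costs `ε` twice.
-/

section Hoeffding

open ProbabilityTheory

variable {S : Type*} [MeasurableSpace S] {μ : Measure S} [IsProbabilityMeasure μ]

lemma measureReal_pi_sum_sub_integral_ge_le {ι : Type*} [Fintype ι] {φ : S → ℝ} {a b : ℝ}
    (hφ : AEMeasurable φ μ) (hab : ∀ᵐ s ∂μ, φ s ∈ Set.Icc a b) {ε : ℝ} (hε : 0 ≤ ε) :
    (Measure.pi fun _ : ι ↦ μ).real {ω | ε ≤ ∑ i, (φ (ω i) - μ[φ])} ≤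
      Real.exp (-(2 * ε ^ 2 / (Fintype.card ι * (b - a) ^ 2))) := by
  have hindep : iIndepFun (fun i (ω : ι → S) ↦ φ (ω i) - μ[φ]) (Measure.pi fun _ ↦ μ) :=
    iIndepFun_pi fun _ ↦ hφ.sub_const _
  have hsub (i : ι) : HasSubgaussianMGF (fun ω : ι → S ↦ φ (ω i) - μ[φ])
      ((‖b - a‖₊ / 2) ^ 2) (Measure.pi fun _ ↦ μ) := by
    have heval := measurePreserving_eval (fun _ : ι ↦ μ) i
    have hmarginal := hasSubgaussianMGF_of_mem_Icc hφ hab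
    rw [← heval.map_eq] at hmarginal
    simpa only [heval.map_eq] using! hmarginal.of_map heval.measurable.aemeasurable
  refine (HasSubgaussianMGF.measure_sum_ge_le_of_iIndepFun hindep (fun i _ ↦ hsub i) hε).trans_eq ?_
  simp only [sum_const, card_univ, nsmul_eq_mul, NNReal.coe_mul, NNReal.coe_natCast,
    NNReal.coe_pow, NNReal.coe_div, coe_nnnorm, Real.norm_eq_abs, NNReal.coe_ofNat, div_pow, sq_abs]
  generalize b - a = w
  congr 1
  ring

/-- The average of `φ` over the sample `ω` (`0` for the empty sample); it is the empirical risk when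
`φ` is a loss. -/
noncomputable def empiricalMean {S : Type*} {n : ℕ} (φ : S → ℝ) (ω : Fin n → S) : ℝ :=
  1 / n * ∑ i, φ (ω i)

lemma natCast_mul_empiricalMean_sub {S : Type*} {n : ℕ} (φ : S → ℝ) (ω : Fin n → S) (m : ℝ) :
    n * (empiricalMean φ ω - m) = ∑ i, (φ (ω i) - m) := by
  rcases n.eq_zero_or_pos with rfl | hn
  · simp
  · simp only [empiricalMean, sum_sub_distrib, sum_const, card_univ, Fintype.card_fin, nsmul_eq_mul]
    field_simp

lemma measureReal_pi_empiricalMean_sub_integral_ge_le {n : ℕ} {φ : S → ℝ} {a b : ℝ}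
    (hφ : AEMeasurable φ μ) (hab : ∀ᵐ s ∂μ, φ s ∈ Set.Icc a b) {ε : ℝ} (hε : 0 ≤ ε) :
    (Measure.pi fun _ : Fin n ↦ μ).real {ω | ε ≤ empiricalMean φ ω - μ[φ]} ≤
      Real.exp (-(2 * n * ε ^ 2 / (b - a) ^ 2)) := by
  calc
    _ ≤ (Measure.pi fun _ : Fin n ↦ μ).real {ω | n * ε ≤ ∑ i, (φ (ω i) - μ[φ])} := by
      refine measureReal_mono fun ω hω ↦ ?_
      rw [Set.mem_ofPred_eq, ← natCast_mul_empiricalMean_sub]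
      exact mul_le_mul_of_nonneg_left hω n.cast_nonneg
    _ ≤ Real.exp (-(2 * (n * ε) ^ 2 / (Fintype.card (Fin n) * (b - a) ^ 2))) :=
      measureReal_pi_sum_sub_integral_ge_le hφ hab (by positivity)
    _ = _ := by
      rw [Fintype.card_fin]
      rcases n.eq_zero_or_pos with rfl | hn
      · simp
      · congr 1
        field_simp

lemma measureReal_pi_abs_empiricalMean_sub_integral_ge_le {n : ℕ} {φ : S → ℝ} {a b : ℝ}
    (hφ : AEMeasurable φ μ) (hab : ∀ᵐ s ∂μ, φ s ∈ Set.Icc a b) {ε : ℝ} (hε : 0 ≤ ε) :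
    (Measure.pi fun _ : Fin n ↦ μ).real {ω | ε ≤ |empiricalMean φ ω - μ[φ]|} ≤
      2 * Real.exp (-(2 * n * ε ^ 2 / (b - a) ^ 2)) := by
  have hupper := measureReal_pi_empiricalMean_sub_integral_ge_le (n := n) hφ hab hε
  have hlower : (Measure.pi fun _ : Fin n ↦ μ).real {ω | ε ≤ -(empiricalMean φ ω - μ[φ])} ≤
      Real.exp (-(2 * n * ε ^ 2 / (b - a) ^ 2)) := by
    have hneg : ∀ᵐ s ∂μ, -φ s ∈ Set.Icc (-b) (-a) := by
      filter_upwards [hab] with s hs using ⟨neg_le_neg hs.2, neg_le_neg hs.1⟩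
    convert measureReal_pi_empiricalMean_sub_integral_ge_le (n := n) hφ.neg hneg hε using 4
    · simp only [empiricalMean, Pi.neg_apply, sum_neg_distrib, integral_neg]
      ring_nf
    · ring
  simp only [le_abs, Set.ofPred_or]
  linarith [measureReal_union_le (μ := Measure.pi fun _ : Fin n ↦ μ)
    {ω | ε ≤ empiricalMean φ ω - μ[φ]} {ω | ε ≤ -(empiricalMean φ ω - μ[φ])}]

end Hoeffding

section EmpiricalRiskMinimization

open ProbabilityTheory

/-- The deviation at which the two-sided Hoeffding bounds for `N` averages of `n` samples with
values in an interval of length `w` add up to `δ`. -/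
noncomputable def hoeffdingRadius (w : ℝ) (N n : ℕ) (δ : ℝ) : ℝ :=
  w * √((Real.log N + Real.log (2 / δ)) / (2 * n))

lemma hoeffdingRadius_nonneg {w : ℝ} (hw : 0 ≤ w) (N n : ℕ) (δ : ℝ) :
    0 ≤ hoeffdingRadius w N n δ :=
  mul_nonneg hw (Real.sqrt_nonneg _)

lemma card_mul_two_mul_exp_hoeffdingRadius {w : ℝ} (hw : w ≠ 0) {N n : ℕ} (hN : N ≠ 0)
    (hn : n ≠ 0) {δ : ℝ} (hδ0 : 0 < δ) (hδ2 : δ ≤ 2) :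
    N * (2 * Real.exp (-(2 * n * hoeffdingRadius w N n δ ^ 2 / w ^ 2))) = δ := by
  have hlogδ : 0 ≤ Real.log (2 / δ) := Real.log_nonneg ((one_le_div hδ0).2 hδ2)
  have hexponent : 2 * n * hoeffdingRadius w N n δ ^ 2 / w ^ 2 =
      Real.log N + Real.log (2 / δ) := by
    rw [hoeffdingRadius, mul_pow, Real.sq_sqrt (by positivity)]
    field_simp
  rw [hexponent, Real.exp_neg, Real.exp_add, Real.exp_log (by positivity),
    Real.exp_log (by positivity)]
  field_simp

lemma le_add_two_mul_of_abs_sub_lt {K : Type*} {R Rₙ : K → ℝ} {ε : ℝ}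
    (hdev : ∀ k, |Rₙ k - R k| < ε) {k₀ : K} (hmin : ∀ k, Rₙ k₀ ≤ Rₙ k) (k : K) :
    R k₀ ≤ R k + 2 * ε := by
  linarith [(abs_lt.1 (hdev k₀)).1, (abs_lt.1 (hdev k)).2, hmin k]

lemma ofReal_one_sub_le_measure_compl {Ω : Type*} [MeasurableSpace Ω] {P : Measure Ω}
    [IsProbabilityMeasure P] {A : Set Ω} {δ : ℝ} (hA : P.real A ≤ δ) :
    ENNReal.ofReal (1 - δ) ≤ P Aᶜ := by
  have hcover : P.real Set.univ ≤ P.real A + P.real Aᶜ := by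
    rw [← Set.union_compl_self A]
    exact measureReal_union_le _ _
  rw [probReal_univ] at hcover
  rw [← ofReal_measureReal]
  exact ENNReal.ofReal_le_ofReal (by linarith)

variable {S : Type*} [MeasurableSpace S] {μ : Measure S} [IsProbabilityMeasure μ]
  {K : Type*} [Fintype K] {ℓ : K → S → ℝ} {a b : ℝ}

lemma ofReal_one_sub_le_measure_pi_forall_abs_empiricalMean_sub_lt [Nonempty K]
    (hℓ : ∀ k, AEMeasurable (ℓ k) μ) (hab : a < b) (hbound : ∀ k, ∀ᵐ s ∂μ, ℓ k s ∈ Set.Icc a b)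
    {n : ℕ} (hn : n ≠ 0) {δ : ℝ} (hδ0 : 0 < δ) (hδ1 : δ ≤ 1) :
    ENNReal.ofReal (1 - δ) ≤ (Measure.pi fun _ : Fin n ↦ μ)
      {ω | ∀ k,
        |empiricalMean (ℓ k) ω - μ[ℓ k]| < hoeffdingRadius (b - a) (Fintype.card K) n δ} := by
  set ε := hoeffdingRadius (b - a) (Fintype.card K) n δ
  have hε : 0 ≤ ε := hoeffdingRadius_nonneg (sub_pos.2 hab).le _ _ _
  have hunion : (Measure.pi fun _ : Fin n ↦ μ).real
      (⋃ k, {ω | ε ≤ |empiricalMean (ℓ k) ω - μ[ℓ k]|}) ≤ δ := by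
    calc
      _ ≤ ∑ k, (Measure.pi fun _ : Fin n ↦ μ).real {ω | ε ≤ |empiricalMean (ℓ k) ω - μ[ℓ k]|} :=
        measureReal_iUnion_fintype_le _
      _ ≤ ∑ _k : K, 2 * Real.exp (-(2 * n * ε ^ 2 / (b - a) ^ 2)) :=
        sum_le_sum fun k _ ↦
          measureReal_pi_abs_empiricalMean_sub_integral_ge_le (hℓ k) (hbound k) hε
      _ = δ := by
        rw [sum_const, nsmul_eq_mul, card_univ]
        exact card_mul_two_mul_exp_hoeffdingRadius (sub_pos.2 hab).ne' Fintype.card_ne_zero hn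
          hδ0 (hδ1.trans one_le_two)
  convert! ofReal_one_sub_le_measure_compl hunion using 2
  ext ω
  simp

theorem ofReal_one_sub_le_measure_pi_forall_risk_le
    (hℓ : ∀ k, AEMeasurable (ℓ k) μ) (hab : a < b) (hbound : ∀ k, ∀ᵐ s ∂μ, ℓ k s ∈ Set.Icc a b)
    {n : ℕ} (hn : n ≠ 0) {δ : ℝ} (hδ0 : 0 < δ) (hδ1 : δ ≤ 1) {g : (Fin n → S) → K}
    (hmin : ∀ ω k, empiricalMean (ℓ (g ω)) ω ≤ empiricalMean (ℓ k) ω) :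
    ENNReal.ofReal (1 - δ) ≤ (Measure.pi fun _ : Fin n ↦ μ)
      {ω | ∀ k, μ[ℓ (g ω)] ≤ μ[ℓ k] + 2 * hoeffdingRadius (b - a) (Fintype.card K) n δ} := by
  have : Nonempty S := μ.nonempty_of_neZero
  have : Nonempty K := Nonempty.map g inferInstance
  refine (ofReal_one_sub_le_measure_pi_forall_abs_empiricalMean_sub_lt hℓ hab hbound hn
    hδ0 hδ1).trans (measure_mono fun ω hω ↦ ?_)
  exact le_add_two_mul_of_abs_sub_lt hω (hmin ω)

end EmpiricalRiskMinimization

section WeightedDirac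

variable {S : Type*} [Fintype S] [MeasurableSpace S]

/-- The measure with mass `p s` at each point `s`, the law of a single training sequence; negative
weights are read as `0`. -/
noncomputable def weightedDirac (p : S → ℝ) : Measure S :=
  ∑ s, ENNReal.ofReal (p s) • Measure.dirac s

variable {p : S → ℝ}

lemma isProbabilityMeasure_weightedDirac (hp : ∀ s, 0 ≤ p s) (hsum : ∑ s, p s = 1) :
    IsProbabilityMeasure (weightedDirac p) := by
  constructor
  simp only [weightedDirac, Measure.finsetSum_apply, Measure.smul_apply, measure_univ, smul_eq_mul,
    mul_one]
  rw [← ENNReal.ofReal_sum_of_nonneg fun s _ ↦ hp s, hsum, ENNReal.ofReal_one]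

lemma integral_weightedDirac [MeasurableSingletonClass S] (hp : ∀ s, 0 ≤ p s) (φ : S → ℝ) :
    ∫ s, φ s ∂weightedDirac p = ∑ s, p s * φ s := by
  rw [weightedDirac,
    integral_finsetSum_measure fun s _ ↦ Integrable.of_finite.smul_measure ENNReal.ofReal_ne_top]
  simp only [integral_smul_measure, integral_dirac, ENNReal.toReal_ofReal (hp _), smul_eq_mul]

instance isFiniteMeasure_weightedDirac : IsFiniteMeasure (weightedDirac p) := by
  constructor
  simp [weightedDirac, Measure.finsetSum_apply]

lemma map_weightedDirac {T : Type*} [MeasurableSpace T] {e : S → T} (he : Measurable e) :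
    (weightedDirac p).map e = ∑ s, ENNReal.ofReal (p s) • Measure.dirac (e s) := by
  simp only [weightedDirac, Measure.map_finset_sum he.aemeasurable, Measure.map_smul,
    Measure.map_dirac' he]

end WeightedDirac

lemma measure_pi_preimage_comp_le {ι S T : Type*} [Fintype ι] [MeasurableSpace S]
    [MeasurableSpace T] {μ : Measure S} {e : S → T} (he : Measurable e) [SigmaFinite (μ.map e)]
    (A : Set (ι → T)) :
    Measure.pi (fun _ ↦ μ) ((fun ω i ↦ e (ω i)) ⁻¹' A) ≤ Measure.pi (fun _ ↦ μ.map e) A := by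
  rw [← Measure.pi_map_pi fun _ ↦ he.aemeasurable]
  exact Measure.le_map_apply (Measurable.aemeasurable (by fun_prop)) A

/-- A coarser σ-algebra only raises outer measures, so estimates may be proved on `⊤`, where every
function is measurable. -/
lemma pi_weightedDirac_le_of_le {ι S : Type*} [Fintype ι] [Fintype S] {m m' : MeasurableSpace S}
    (hm : m ≤ m') (p : S → ℝ) (A : Set (ι → S)) :
    @Measure.pi ι (fun _ ↦ S) _ (fun _ ↦ m') (fun _ ↦ @weightedDirac S _ m' p) A ≤
      @Measure.pi ι (fun _ ↦ S) _ (fun _ ↦ m) (fun _ ↦ @weightedDirac S _ m p) A := by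
  have hid : @Measurable S S m' m id := measurable_id'' hm
  have hmap : @Measure.map S S m' m id (@weightedDirac S _ m' p) = @weightedDirac S _ m p :=
    @map_weightedDirac S _ m' p S m id hid
  have hpi := @measure_pi_preimage_comp_le ι S S _ m' m (@weightedDirac S _ m' p) id hid
  rw [hmap] at hpi
  exact hpi A

theorem ofReal_one_sub_le_measure_pi_weightedDirac_forall_risk_le {S K : Type*} [Fintype S]
    [MeasurableSpace S] [Fintype K] {ℓ : K → S → ℝ} {a b : ℝ} (hab : a < b)
    (hbound : ∀ k s, ℓ k s ∈ Set.Icc a b) {p : S → ℝ} (hp : ∀ s, 0 ≤ p s) (hpsum : ∑ s, p s = 1)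
    {n : ℕ} (hn : n ≠ 0) {δ : ℝ} (hδ0 : 0 < δ) (hδ1 : δ ≤ 1) {g : (Fin n → S) → K}
    (hmin : ∀ ω k, empiricalMean (ℓ (g ω)) ω ≤ empiricalMean (ℓ k) ω) :
    ENNReal.ofReal (1 - δ) ≤ Measure.pi (fun _ : Fin n ↦ weightedDirac p)
      {ω | ∀ k, ∑ s, p s * ℓ (g ω) s ≤
        ∑ s, p s * ℓ k s + 2 * hoeffdingRadius (b - a) (Fintype.card K) n δ} := by
  have hdiscrete := @ofReal_one_sub_le_measure_pi_forall_risk_le S ⊤ (@weightedDirac S _ ⊤ p)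
    (@isProbabilityMeasure_weightedDirac S _ ⊤ p hp hpsum) K _ ℓ a b
    (fun _ ↦ measurable_from_top.aemeasurable) hab (fun k ↦ .of_forall (hbound k)) n hn δ hδ0 hδ1
    g hmin
  have hintegral := @integral_weightedDirac S _ ⊤ p
    (@MeasurableSingletonClass.mk S ⊤ fun _ ↦ trivial) hp
  simp only [hintegral] at hdiscrete
  exact hdiscrete.trans (pi_weightedDirac_le_of_le le_top p _)

lemma sum_mul_log_div_eq_add {S : Type*} [Fintype S] (p : S → ℝ) {h : S → ℝ}
    (hh : ∀ s, h s ≠ 0) :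
    ∑ s, p s * Real.log (p s / h s) =
      ∑ s, p s * Real.log (p s) + ∑ s, p s * -Real.log (h s) := by
  rw [← sum_add_distrib]
  refine sum_congr rfl fun s _ ↦ ?_
  rcases eq_or_ne (p s) 0 with hp | hp
  · simp only [hp, zero_mul, add_zero]
  · rw [Real.log_div hp (hh s)]
    ring

theorem erm_excess_risk_general {S : Type*} [Fintype S] [MeasurableSpace S]
    (H : Finset (S → ℝ)) (hH : ∀ h ∈ H, ∀ s, 0 < h s) {a b : ℝ} (hab : a < b)
    (hlog : ∀ h ∈ H, ∀ s, Real.log (h s) ∈ Set.Icc a b)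
    {p : S → ℝ} (hp : ∀ s, 0 ≤ p s) (hpsum : ∑ s, p s = 1) {n : ℕ} (hn : n ≠ 0)
    {g : (Fin n → S) → S → ℝ} (hgH : ∀ ω, g ω ∈ H)
    (hgERM : ∀ ω, ∀ h ∈ H,
      -((1 : ℝ) / n) * ∑ i, Real.log (g ω (ω i)) ≤ -((1 : ℝ) / n) * ∑ i, Real.log (h (ω i)))
    {δ : ℝ} (hδ0 : 0 < δ) (hδ1 : δ ≤ 1) :
    ENNReal.ofReal (1 - δ) ≤
      (Measure.pi (fun _ : Fin n ↦ ∑ s, ENNReal.ofReal (p s) • Measure.dirac s))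
        {ω | ∀ h ∈ H, ∑ s, p s * Real.log (p s / g ω s) ≤ ∑ s, p s * Real.log (p s / h s) +
          2 * (b - a) * √((Real.log #H + Real.log (2 / δ)) / (2 * n))} := by
  let crossEntropyLoss (h : H) (s : S) : ℝ := -Real.log (h.1 s)
  have hbound (h : H) (s : S) : crossEntropyLoss h s ∈ Set.Icc (-b) (-a) :=
    ⟨neg_le_neg (hlog h h.2 s).2, neg_le_neg (hlog h h.2 s).1⟩
  have hmin (ω : Fin n → S) (h : H) : empiricalMean (crossEntropyLoss ⟨g ω, hgH ω⟩) ω ≤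
      empiricalMean (crossEntropyLoss h) ω := by
    simpa only [empiricalMean, crossEntropyLoss, sum_neg_distrib, mul_neg, neg_mul] using
      hgERM ω h h.2
  have hklLoss (h : S → ℝ) (hh : h ∈ H) := sum_mul_log_div_eq_add p fun s ↦ (hH h hh s).ne'
  refine (ofReal_one_sub_le_measure_pi_weightedDirac_forall_risk_le (neg_lt_neg hab) hbound hp
    hpsum hn hδ0 hδ1 hmin).trans (measure_mono fun ω hω h hh ↦ ?_)
  have hrisk := hω ⟨h, hh⟩
  simp only [Fintype.card_coe, neg_sub_neg, hoeffdingRadius, ← mul_assoc] at hrisk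
  rw [hklLoss (g ω) (hgH ω), hklLoss h hh]
  linarith

/-- Theorem 1(a) with explicit constants: excess risk of ERM.
With the setup of Statement 2, let `g` be an empirical risk minimizer: for each training
sample `ω`, `g ω : S → Y` minimizes the empirical cross-entropy
`Ĉ(h)(ω) = -(1/n) ∑ i, log h(ω i)` over all `h : S → Y`.  Then for every `δ ∈ (0,1)`,
with probability at least `1 - δ`, the Kullback–Leibler loss
`L(h) = ∑ s, p s * log (p s / h s)` of `g ω` exceeds the minimum loss over the class by at
most `2 lam √((|S| log |Y| + log (2/δ)) / (2 n))`. -/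
theorem erm_excess_risk
    {S : Type*} [Fintype S] [Nonempty S] [MeasurableSpace S]
    (Y : Finset ℝ) (hY : ∀ y ∈ Y, 0 < y ∧ y ≤ 1) (hYcard : 2 ≤ Y.card)
    (lam : ℝ) (hlam : 0 < lam)
    (hlog : ∀ y ∈ Y, |Real.log y| ≤ lam)
    (hratio : ∀ a ∈ Y, ∀ b ∈ Y, |Real.log (a / b)| ≤ lam)
    (p : S → ℝ) (hpY : ∀ s, p s ∈ Y) (hpsum : ∑ s, p s = 1)
    (n : ℕ) (hn : 0 < n)
    (g : (Fin n → S) → S → ℝ) (hgY : ∀ ω s, g ω s ∈ Y)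
    (hgERM : ∀ ω : Fin n → S, ∀ h : S → ℝ, (∀ s, h s ∈ Y) →
      -((1 : ℝ) / n) * ∑ i, Real.log (g ω (ω i)) ≤
        -((1 : ℝ) / n) * ∑ i, Real.log (h (ω i)))
    (δ : ℝ) (hδ0 : 0 < δ) (hδ1 : δ < 1) :
    ENNReal.ofReal (1 - δ) ≤
      (Measure.pi (fun _ : Fin n => ∑ s, ENNReal.ofReal (p s) • Measure.dirac s))
        {ω : Fin n → S | ∀ h : S → ℝ, (∀ s, h s ∈ Y) →
          ∑ s, p s * Real.log (p s / g ω s) ≤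
            (∑ s, p s * Real.log (p s / h s)) +
              2 * lam * Real.sqrt
                (((Fintype.card S : ℝ) * Real.log (Y.card) + Real.log (2 / δ)) /
                  (2 * n))} := by
  classical
  have hlogY : ∀ y ∈ Y, Real.log y ∈ Set.Icc (-lam) 0 := fun y hy ↦
    ⟨neg_le_of_abs_le (hlog y hy), Real.log_nonpos (hY y hy).1.le (hY y hy).2⟩
  simpa only [Fintype.mem_piFinset, Fintype.card_piFinset, prod_const, card_univ, Nat.cast_pow,
    Real.log_pow, zero_sub, neg_neg] using erm_excess_risk_general (Fintype.piFinset fun _ : S ↦ Y)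
      (fun h hh s ↦ (hY _ (Fintype.mem_piFinset.1 hh s)).1) (neg_lt_zero.2 hlam)
      (fun h hh s ↦ hlogY _ (Fintype.mem_piFinset.1 hh s)) (fun s ↦ (hY _ (hpY s)).1.le) hpsum
      hn.ne' (fun ω ↦ Fintype.mem_piFinset.2 (hgY ω))
      (fun ω h hh ↦ hgERM ω h (Fintype.mem_piFinset.1 hh)) hδ0 hδ1.le
end
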